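/- Let n = 4 and k ≥ 1. Setting Ĥ_{k,2±} = {u ∈ Ĥ_{k,2} : 𝒟(u) = ±(k+1)u}, one has the internal direct sum Ĥ_{k,2} = Ĥ_{k,2+} ⊕ Ĥ_{k,2−}, and each of Ĥ_{k,2+} and Ĥ_{k,2−} is invariant under all the operators L_{r,s} (1 ≤ r < s ≤ 4) with no L_{r,s}-invariant ℝ-subspaces other than {0} and itself. -/

import Mathlib

open MvPolynomial

/-- The Laplacian `Δ = ∑ᵣ ∂²_{xᵣ}` on `ℝ[x₁,x₂,x₃,x₄]`. -/
noncomputable def lap (p : MvPolynomial (Fin 4) ℝ) : MvPolynomial (Fin 4) ℝ :=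
  ∑ r : Fin 4, pderiv r (pderiv r p)

/-- `d_{r,s} = x_s∂_{x_r} − x_r∂_{x_s}` (with `Fin 4` indices shifted down by one). -/
noncomputable def dd (r s : Fin 4) (p : MvPolynomial (Fin 4) ℝ) :
    MvPolynomial (Fin 4) ℝ :=
  X s * pderiv r p - X r * pderiv s p

/-- The operator `𝒟` given by the matrix
`[[0, d_{3,4}, d_{4,2}, d_{2,3}], [d_{4,3}, 0, d_{1,4}, d_{3,1}],
  [d_{2,4}, d_{4,1}, 0, d_{1,2}], [d_{3,2}, d_{1,3}, d_{2,1}, 0]]`. -/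
noncomputable def Dop (u : Fin 4 → MvPolynomial (Fin 4) ℝ) :
    Fin 4 → MvPolynomial (Fin 4) ℝ :=
  ![dd 2 3 (u 1) + dd 3 1 (u 2) + dd 1 2 (u 3),
    dd 3 2 (u 0) + dd 0 3 (u 2) + dd 2 0 (u 3),
    dd 1 3 (u 0) + dd 3 0 (u 1) + dd 0 1 (u 3),
    dd 2 1 (u 0) + dd 0 2 (u 1) + dd 1 0 (u 2)]

/-- The set `Ĥ_{k,2}` of tuples of degree-`k` harmonics `(f₁,…,f₄)` with
`∑ᵣ xᵣ fᵣ = 0`. -/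
def Hk2Set (k : ℕ) : Set (Fin 4 → MvPolynomial (Fin 4) ℝ) :=
  {w | (∀ r, (w r).IsHomogeneous k ∧ lap (w r) = 0) ∧ (∑ r : Fin 4, X r * w r) = 0}

/-- `Ĥ_{k,2+} = {u ∈ Ĥ_{k,2} : 𝒟u = (k+1)u}`. -/
def Hk2Plus (k : ℕ) : Set (Fin 4 → MvPolynomial (Fin 4) ℝ) :=
  {u ∈ Hk2Set k | Dop u = ((k : ℝ) + 1) • u}

/-- `Ĥ_{k,2−} = {u ∈ Ĥ_{k,2} : 𝒟u = −(k+1)u}`. -/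
def Hk2Minus (k : ℕ) : Set (Fin 4 → MvPolynomial (Fin 4) ℝ) :=
  {u ∈ Hk2Set k | Dop u = (-((k : ℝ) + 1)) • u}

/-- The `o(4,ℝ)`-action on tuples:
`L_{r,s}(u) = (x_r∂_{x_s} − x_s∂_{x_r})(u) + u_s ς_r − u_r ς_s`. -/
noncomputable def Lop (r s : Fin 4) (u : Fin 4 → MvPolynomial (Fin 4) ℝ) :
    Fin 4 → MvPolynomial (Fin 4) ℝ :=
  fun j => (X r * pderiv s (u j) - X s * pderiv r (u j))
    + (if j = r then u s else 0) - (if j = s then u r else 0)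

theorem pderiv_pderiv_comm (i j : Fin 4) (p : MvPolynomial (Fin 4) ℝ) :
    pderiv i (pderiv j p) = pderiv j (pderiv i p) := by
  ext m
  simp only [coeff_pderiv]
  rw [add_right_comm]
  by_cases h : i = j
  · subst h; ring
  · simp [h, Ne.symm h]; ring

/-- Partial derivatives commute; these instances sort the two indices increasingly. -/
theorem pderiv_sort (p : MvPolynomial (Fin 4) ℝ) :
    pderiv 1 (pderiv 0 p) = pderiv 0 (pderiv 1 p) ∧
    pderiv 2 (pderiv 0 p) = pderiv 0 (pderiv 2 p) ∧
    pderiv 3 (pderiv 0 p) = pderiv 0 (pderiv 3 p) ∧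
    pderiv 2 (pderiv 1 p) = pderiv 1 (pderiv 2 p) ∧
    pderiv 3 (pderiv 1 p) = pderiv 1 (pderiv 3 p) ∧
    pderiv 3 (pderiv 2 p) = pderiv 2 (pderiv 3 p) := by
  refine ⟨?_, ?_, ?_, ?_, ?_, ?_⟩ <;> exact pderiv_pderiv_comm _ _ _

theorem pderiv_X_mul (i j : Fin 4) (p : MvPolynomial (Fin 4) ℝ) :
    pderiv i (X j * p) = (if j = i then p else 0) + X j * pderiv i p := by
  rw [pderiv_mul, pderiv_X, Pi.single_apply]
  split_ifs with h <;> simp_all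

theorem lap_add (p q : MvPolynomial (Fin 4) ℝ) : lap (p + q) = lap p + lap q := by
  simp [lap, Finset.sum_add_distrib]

theorem lap_sub (p q : MvPolynomial (Fin 4) ℝ) : lap (p - q) = lap p - lap q := by
  simp [lap, Finset.sum_sub_distrib]

theorem lap_smul (c : ℝ) (p : MvPolynomial (Fin 4) ℝ) : lap (c • p) = c • lap p := by
  simp [lap, Finset.smul_sum]

theorem lap_dd (r s : Fin 4) (p : MvPolynomial (Fin 4) ℝ) :
    lap (dd r s p) = dd r s (lap p) := by
  fin_cases r <;> fin_cases s <;>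
  · simp [lap, dd, Fin.sum_univ_four, pderiv_sort]
    try ring

theorem dd_isHomogeneous {k : ℕ} (r s : Fin 4) {p : MvPolynomial (Fin 4) ℝ}
    (hp : p.IsHomogeneous k) : (dd r s p).IsHomogeneous k := by
  rcases k with _ | k
  · rw [← totalDegree_zero_iff_isHomogeneous, totalDegree_eq_zero_iff_eq_C] at hp
    rw [hp]
    simpa [dd] using isHomogeneous_zero _ _ _
  · rw [add_comm]
    exact ((isHomogeneous_X ℝ s).mul hp.pderiv).sub ((isHomogeneous_X ℝ r).mul hp.pderiv)

theorem euler {k : ℕ} {p : MvPolynomial (Fin 4) ℝ} (hp : p.IsHomogeneous k) :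
    X 0 * pderiv 0 p + X 1 * pderiv 1 p + X 2 * pderiv 2 p + X 3 * pderiv 3 p
      = (k : MvPolynomial (Fin 4) ℝ) * p := by
  simpa [Fin.sum_univ_four] using hp.sum_X_mul_pderiv

/-- Differentiated Euler identity. -/
theorem euler_pderiv {k : ℕ} {p : MvPolynomial (Fin 4) ℝ} (hp : p.IsHomogeneous k) (i : Fin 4) :
    pderiv i p + (X 0 * pderiv 0 (pderiv i p) + X 1 * pderiv 1 (pderiv i p)
      + X 2 * pderiv 2 (pderiv i p) + X 3 * pderiv 3 (pderiv i p))
      = (k : MvPolynomial (Fin 4) ℝ) * pderiv i p := by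
  have h := congrArg (pderiv i) (euler hp)
  have hk : pderiv i ((k : MvPolynomial (Fin 4) ℝ) * p) = k * pderiv i p := by
    simp
  rw [hk] at h
  rw [← h]
  fin_cases i <;>
  · simp [pderiv_sort]
    ring

theorem Hk2Set_radial {k : ℕ} {u : Fin 4 → MvPolynomial (Fin 4) ℝ} (hu : u ∈ Hk2Set k) :
    X 0 * u 0 + X 1 * u 1 + X 2 * u 2 + X 3 * u 3 = 0 := by
  simpa [Fin.sum_univ_four] using hu.2

theorem Hk2Set_lap_eq {k : ℕ} {u : Fin 4 → MvPolynomial (Fin 4) ℝ} (hu : u ∈ Hk2Set k)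
    (r : Fin 4) :
    pderiv 0 (pderiv 0 (u r)) + pderiv 1 (pderiv 1 (u r)) + pderiv 2 (pderiv 2 (u r))
      + pderiv 3 (pderiv 3 (u r)) = 0 := by
  simpa [lap, Fin.sum_univ_four] using (hu.1 r).2

theorem Hk2Set_radial_pderiv {k : ℕ} {u : Fin 4 → MvPolynomial (Fin 4) ℝ} (hu : u ∈ Hk2Set k)
    (i : Fin 4) :
    u i + (X 0 * pderiv i (u 0) + X 1 * pderiv i (u 1) + X 2 * pderiv i (u 2)
      + X 3 * pderiv i (u 3)) = 0 := by
  have h := congrArg (pderiv i) (Hk2Set_radial hu)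
  rw [map_zero] at h
  rw [← h]
  fin_cases i <;>
  · simp
    try ring

/-- Members of `Ĥ_{k,2}` are divergence free: apply the Laplacian to `∑ xᵣ fᵣ = 0`. -/
theorem Hk2Set_divergence {k : ℕ} {u : Fin 4 → MvPolynomial (Fin 4) ℝ} (hu : u ∈ Hk2Set k) :
    pderiv 0 (u 0) + pderiv 1 (u 1) + pderiv 2 (u 2) + pderiv 3 (u 3) = 0 := by
  have h := congrArg lap (Hk2Set_radial hu)
  simp [lap, Fin.sum_univ_four] at h
  have h2 : (2 : MvPolynomial (Fin 4) ℝ)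
      * (pderiv 0 (u 0) + pderiv 1 (u 1) + pderiv 2 (u 2) + pderiv 3 (u 3)) = 0 := by
    linear_combination h - X 0 * Hk2Set_lap_eq hu 0 - X 1 * Hk2Set_lap_eq hu 1
      - X 2 * Hk2Set_lap_eq hu 2
      - X 3 * Hk2Set_lap_eq hu 3
  simpa using h2

theorem Dop_Dop {k : ℕ} {u : Fin 4 → MvPolynomial (Fin 4) ℝ} (hu : u ∈ Hk2Set k) :
    Dop (Dop u) = (((k : ℝ) + 1) ^ 2) • u := by
  have hdiv (i : Fin 4) : pderiv i (pderiv 0 (u 0)) + pderiv i (pderiv 1 (u 1))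
      + pderiv i (pderiv 2 (u 2)) + pderiv i (pderiv 3 (u 3)) = 0 := by
    simpa using congrArg (pderiv i) (Hk2Set_divergence hu)
  have hE (j : Fin 4) := euler (hu.1 j).1
  have hE2 (i j : Fin 4) := euler_pderiv (hu.1 j).1 i
  funext r
  have key (c : MvPolynomial (Fin 4) ℝ) (hc : c = ((k : MvPolynomial (Fin 4) ℝ) + 1) ^ 2 * u r) :
      c = ((((k : ℝ) + 1) ^ 2) • u) r := by
    rw [hc, Pi.smul_apply, smul_eq_C_mul]
    simp
  apply key
  have hd (i : Fin 4) := congrArg (X r * ·) (hdiv i)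
  have hl (i : Fin 4) := congrArg (X r * ·) (Hk2Set_lap_eq hu i)
  have h1 := hd 0
  have h2 := hd 1
  have h3 := hd 2
  have h4 := hd 3
  have h5 := hl 0
  have h6 := hl 1
  have h7 := hl 2
  have h8 := hl 3
  have e0 := hE2 0 r
  have e1 := hE2 1 r
  have e2 := hE2 2 r
  have e3 := hE2 3 r
  have f0 := hE2 r 0
  have f1 := hE2 r 1
  have f2 := hE2 r 2
  have f3 := hE2 r 3
  have hdr := hdiv r
  have her := hE r
  have hr := Hk2Set_radial_pderiv hu r
  have hlr := Hk2Set_lap_eq hu r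
  clear hd hl hE2 hE hdiv key
  fin_cases r <;>
  · simp only [Dop, dd, pderiv_X_mul, pderiv_sort, map_add, map_sub, Matrix.cons_val, Fin.isValue,
      Fin.zero_eta, Fin.mk_one, Fin.reduceFinMk, Fin.reduceEq, if_true, if_false]
      at h1 h2 h3 h4 h5 h6 h7 h8 e0 e1 e2 e3 f0 f1 f2 f3 hdr her hr hlr ⊢
    linear_combination ((k : MvPolynomial (Fin 4) ℝ) + 1) * her - (k + 1) * hr
      - (X 0 ^ 2 + X 1 ^ 2 + X 2 ^ 2 + X 3 ^ 2) * hlr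
      + (X 0 ^ 2 + X 1 ^ 2 + X 2 ^ 2 + X 3 ^ 2) * hdr
      - (X 0 * h1 + X 1 * h2 + X 2 * h3 + X 3 * h4)
      + (X 0 * h5 + X 1 * h6 + X 2 * h7 + X 3 * h8)
      + (X 0 * e0 + X 1 * e1 + X 2 * e2 + X 3 * e3)
      - (X 0 * f0 + X 1 * f1 + X 2 * f2 + X 3 * f3)

theorem Lop_eq (r s : Fin 4) (u : Fin 4 → MvPolynomial (Fin 4) ℝ) (j : Fin 4) :
    Lop r s u j = dd s r (u j) + ((if j = r then u s else 0) - (if j = s then u r else 0)) := by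
  rw [Lop, dd, add_sub_assoc]

set_option maxHeartbeats 2000000 in
theorem Dop_Lop (r s : Fin 4) (u : Fin 4 → MvPolynomial (Fin 4) ℝ) :
    Dop (Lop r s u) = Lop r s (Dop u) := by
  funext j
  fin_cases r <;> fin_cases s <;> fin_cases j <;>
  · simp only [Dop, Lop, dd, pderiv_X_mul, pderiv_sort, map_add, map_sub, Matrix.cons_val,
      Fin.isValue, Fin.zero_eta, Fin.mk_one, Fin.reduceFinMk, Fin.reduceEq, if_true, if_false,
      map_zero]
    ring

theorem dd_add (r s : Fin 4) (p q : MvPolynomial (Fin 4) ℝ) :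
    dd r s (p + q) = dd r s p + dd r s q := by
  simp only [dd, map_add]
  ring

theorem dd_smul (r s : Fin 4) (c : ℝ) (p : MvPolynomial (Fin 4) ℝ) :
    dd r s (c • p) = c • dd r s p := by
  simp [dd, smul_sub]

theorem Dop_add (u v : Fin 4 → MvPolynomial (Fin 4) ℝ) : Dop (u + v) = Dop u + Dop v := by
  funext j
  fin_cases j <;>
  · simp [Dop, dd_add]
    ring

theorem Dop_smul (c : ℝ) (u : Fin 4 → MvPolynomial (Fin 4) ℝ) : Dop (c • u) = c • Dop u := by
  funext j
  fin_cases j <;> simp [Dop, dd_smul]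

theorem Hk2Set_Dop {k : ℕ} {u : Fin 4 → MvPolynomial (Fin 4) ℝ} (hu : u ∈ Hk2Set k) :
    Dop u ∈ Hk2Set k := by
  have hh (r s t : Fin 4) : (dd r s (u t)).IsHomogeneous k := dd_isHomogeneous r s (hu.1 t).1
  have hl (r s t : Fin 4) : lap (dd r s (u t)) = 0 := by
    rw [lap_dd, (hu.1 t).2]
    simp [dd]
  refine ⟨fun r => ?_, ?_⟩
  · fin_cases r <;>
    exact ⟨((hh _ _ _).add (hh _ _ _)).add (hh _ _ _), by simp [Dop, lap_add, hl]⟩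
  · simp [Fin.sum_univ_four, Dop, dd]
    ring

theorem Hk2Set_Lop {k : ℕ} {u : Fin 4 → MvPolynomial (Fin 4) ℝ} (hu : u ∈ Hk2Set k)
    (r s : Fin 4) : Lop r s u ∈ Hk2Set k := by
  have hz : lap 0 = 0 := by simp [lap]
  refine ⟨fun j => ?_, ?_⟩
  · rw [Lop_eq, lap_add, lap_sub, lap_dd, (hu.1 j).2]
    refine ⟨(dd_isHomogeneous s r (hu.1 j).1).add (IsHomogeneous.sub ?_ ?_), ?_⟩
    · split_ifs
      exacts [(hu.1 s).1, isHomogeneous_zero _ _ _]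
    · split_ifs
      exacts [(hu.1 r).1, isHomogeneous_zero _ _ _]
    · rw [apply_ite lap, apply_ite lap, (hu.1 r).2, (hu.1 s).2, hz]
      simp [dd]
  · have h : ∑ j, X j * Lop r s u j = dd s r (∑ j, X j * u j) := by
      fin_cases r <;> fin_cases s <;>
      · simp [Fin.sum_univ_four, Lop, dd]
        try ring
    rw [h, hu.2]
    simp [dd]

/-- The eigenspace of `𝒟` on `Ĥ_{k,2}` for the eigenvalue `c`. -/
def eigenHk2 (k : ℕ) (c : ℝ) : Submodule ℝ (Fin 4 → MvPolynomial (Fin 4) ℝ) where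
  carrier := {u ∈ Hk2Set k | Dop u = c • u}
  zero_mem' := by
    refine ⟨⟨fun r => ⟨isHomogeneous_zero _ _ _, by simp [lap]⟩, by simp⟩, ?_⟩
    simpa using Dop_smul 0 0
  add_mem' := by
    rintro u v ⟨hu, hu'⟩ ⟨hv, hv'⟩
    refine ⟨⟨fun r => ⟨(hu.1 r).1.add (hv.1 r).1, ?_⟩, ?_⟩, ?_⟩
    · rw [Pi.add_apply, lap_add, (hu.1 r).2, (hv.1 r).2, add_zero]
    · simp [mul_add, Finset.sum_add_distrib, hu.2, hv.2]
    · rw [Dop_add, hu', hv', smul_add]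
  smul_mem' := by
    rintro a u ⟨hu, hu'⟩
    refine ⟨⟨fun r => ⟨?_, ?_⟩, ?_⟩, ?_⟩
    · rw [Pi.smul_apply, smul_eq_C_mul]
      exact (hu.1 r).1.C_mul a
    · rw [Pi.smul_apply, lap_smul, (hu.1 r).2, smul_zero]
    · simp [← Finset.smul_sum, hu.2]
    · rw [Dop_smul, hu', smul_comm]

theorem mem_eigenHk2 {k : ℕ} {c : ℝ} {u : Fin 4 → MvPolynomial (Fin 4) ℝ} :
    u ∈ eigenHk2 k c ↔ u ∈ Hk2Set k ∧ Dop u = c • u :=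
  Iff.rfl

theorem Lop_mem_eigenHk2 {k : ℕ} {c : ℝ} {u : Fin 4 → MvPolynomial (Fin 4) ℝ}
    (hu : u ∈ eigenHk2 k c) (r s : Fin 4) : Lop r s u ∈ eigenHk2 k c := by
  refine ⟨Hk2Set_Lop hu.1 r s, ?_⟩
  rw [Dop_Lop, hu.2]
  funext j
  rw [Pi.smul_apply, Lop_eq, Lop_eq]
  simp only [Pi.smul_apply, dd_smul, smul_add, smul_sub, smul_ite, smul_zero]

/-- `Ĥ_{k,2}` is closed under linear combinations of `u` and `𝒟u`. -/
theorem Hk2Set_smul_add_smul_Dop {k : ℕ} {u : Fin 4 → MvPolynomial (Fin 4) ℝ}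
    (hu : u ∈ Hk2Set k) (a b : ℝ) : a • u + b • Dop u ∈ Hk2Set k := by
  have hD := Hk2Set_Dop hu
  refine ⟨fun r => ⟨?_, ?_⟩, ?_⟩
  · simp only [Pi.add_apply, Pi.smul_apply, smul_eq_C_mul]
    exact ((hu.1 r).1.C_mul a).add ((hD.1 r).1.C_mul b)
  · simp only [Pi.add_apply, Pi.smul_apply, lap_add, lap_smul, (hu.1 r).2, (hD.1 r).2, smul_zero,
      add_zero]
  · simp [mul_add, Finset.sum_add_distrib, ← Finset.smul_sum, hu.2, hD.2]

theorem Hk2_splits {k : ℕ} {u : Fin 4 → MvPolynomial (Fin 4) ℝ} (hu : u ∈ Hk2Set k) :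
    ∃! p : (Fin 4 → MvPolynomial (Fin 4) ℝ) × (Fin 4 → MvPolynomial (Fin 4) ℝ),
      p.1 ∈ Hk2Plus k ∧ p.2 ∈ Hk2Minus k ∧ u = p.1 + p.2 := by
  have hk : (k : ℝ) + 1 ≠ 0 := by positivity
  have hDD := Dop_Dop hu
  refine ⟨((1 / 2 : ℝ) • u + (1 / (2 * ((k : ℝ) + 1))) • Dop u,
    (1 / 2 : ℝ) • u + (-1 / (2 * ((k : ℝ) + 1))) • Dop u), ⟨⟨?_, ?_⟩, ⟨?_, ?_⟩, ?_⟩, ?_⟩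
  · exact Hk2Set_smul_add_smul_Dop hu _ _
  · dsimp only
    rw [Dop_add, Dop_smul, Dop_smul, hDD]
    match_scalars <;> field_simp
  · exact Hk2Set_smul_add_smul_Dop hu _ _
  · dsimp only
    rw [Dop_add, Dop_smul, Dop_smul, hDD]
    match_scalars <;> field_simp
  · match_scalars <;> field_simp <;> norm_num
  · rintro ⟨p, q⟩ ⟨⟨-, hp⟩, ⟨-, hq⟩, rfl⟩
    dsimp only at hp hq ⊢
    rw [Dop_add, hp, hq]
    ext1 <;> dsimp only <;> match_scalars <;> field_simp <;> norm_num

/-- The Fischer inner product `⟨p, q⟩ = ∑ₘ m! pₘ qₘ` on `ℝ[x₁,x₂,x₃,x₄]`. -/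
noncomputable def fischer :
    MvPolynomial (Fin 4) ℝ →ₗ[ℝ] MvPolynomial (Fin 4) ℝ →ₗ[ℝ] ℝ :=
  (basisMonomials (Fin 4) ℝ).constr ℝ
    fun m => ((∏ i, (m i).factorial : ℕ) : ℝ) • lcoeff ℝ m

theorem fischer_monomial (m : Fin 4 →₀ ℕ) (c : ℝ) (q : MvPolynomial (Fin 4) ℝ) :
    fischer (monomial m c) q = c * ((∏ i, (m i).factorial : ℕ) * coeff m q) := by
  have h : monomial m c = c • basisMonomials (Fin 4) ℝ m := by
    simp [smul_monomial]
  rw [h, map_smul, fischer, Module.Basis.constr_basis]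
  simp

theorem fischer_comm (p q : MvPolynomial (Fin 4) ℝ) : fischer p q = fischer q p := by
  induction p using MvPolynomial.induction_on' with
  | add a b ha hb => simp [ha, hb]
  | monomial m c =>
    induction q using MvPolynomial.induction_on' with
    | add a b ha hb => simp [ha, hb]
    | monomial n d =>
      rw [fischer_monomial, fischer_monomial, coeff_monomial, coeff_monomial]
      by_cases h : m = n
      · subst h
        simp
        ring
      · simp [h, Ne.symm h]

/-- Multiplication by `xᵢ` is adjoint to `∂ᵢ`. -/
theorem fischer_X_mul (i : Fin 4) (p q : MvPolynomial (Fin 4) ℝ) :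
    fischer (X i * p) q = fischer p (pderiv i q) := by
  induction p using MvPolynomial.induction_on' with
  | add a b ha hb => simp [mul_add, ha, hb]
  | monomial m c =>
    have h : X i * monomial m c = monomial (m + Finsupp.single i 1) c := by
      rw [mul_comm, X, monomial_mul, mul_one]
    have hf : ∏ j, ((m + Finsupp.single i 1 : Fin 4 →₀ ℕ) j).factorial
        = (m i + 1) * ∏ j, (m j).factorial := by
      fin_cases i <;>
      · simp [Fin.prod_univ_four, Nat.factorial_succ]
        ring
    rw [h, fischer_monomial, fischer_monomial, coeff_pderiv, hf]
    push_cast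
    ring

theorem fischer_pderiv (i : Fin 4) (p q : MvPolynomial (Fin 4) ℝ) :
    fischer (pderiv i p) q = fischer p (X i * q) := by
  rw [fischer_comm, ← fischer_X_mul, fischer_comm]

theorem fischer_dd (r s : Fin 4) (p q : MvPolynomial (Fin 4) ℝ) :
    fischer (dd r s p) q = -fischer p (dd r s q) := by
  simp only [dd, map_sub, LinearMap.sub_apply, fischer_X_mul, fischer_pderiv]
  simp only [← fischer_X_mul, ← fischer_pderiv]
  simp only [fischer_X_mul, fischer_pderiv]
  ring

theorem fischer_self_eq_sum (p : MvPolynomial (Fin 4) ℝ) :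
    fischer p p = ∑ m ∈ p.support, coeff m p * ((∏ i, (m i).factorial : ℕ) * coeff m p) := by
  have h : fischer p = ∑ m ∈ p.support, fischer (monomial m (coeff m p)) := by
    rw [← map_sum, support_sum_monomial_coeff]
  rw [h, LinearMap.sum_apply]
  exact Finset.sum_congr rfl fun m _ => fischer_monomial _ _ _

theorem fischer_self_nonneg (p : MvPolynomial (Fin 4) ℝ) : 0 ≤ fischer p p := by
  rw [fischer_self_eq_sum]
  refine Finset.sum_nonneg fun m _ => ?_
  rw [mul_left_comm]
  exact mul_nonneg (Nat.cast_nonneg _) (mul_self_nonneg _)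

theorem eq_zero_of_fischer_self {p : MvPolynomial (Fin 4) ℝ} (hp : fischer p p = 0) : p = 0 := by
  by_contra h
  refine hp.not_gt ?_
  rw [fischer_self_eq_sum]
  refine Finset.sum_pos (fun m hm => ?_) (support_nonempty.mpr h)
  rw [mul_left_comm]
  exact mul_pos (Nat.cast_pos.mpr (Finset.prod_pos fun i _ => Nat.factorial_pos _))
    (mul_self_pos.mpr (mem_support_iff.mp hm))

/-- The Fischer inner product on tuples. -/
noncomputable def tupleForm : LinearMap.BilinForm ℝ (Fin 4 → MvPolynomial (Fin 4) ℝ) :=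
  ∑ j, fischer.compl₁₂ (LinearMap.proj j) (LinearMap.proj j)

theorem tupleForm_apply (u v : Fin 4 → MvPolynomial (Fin 4) ℝ) :
    tupleForm u v = ∑ j, fischer (u j) (v j) := by
  simp [tupleForm, LinearMap.sum_apply]

theorem tupleForm_comm (u v : Fin 4 → MvPolynomial (Fin 4) ℝ) :
    tupleForm u v = tupleForm v u := by
  simp_rw [tupleForm_apply, fischer_comm]

theorem eq_zero_of_tupleForm_self {u : Fin 4 → MvPolynomial (Fin 4) ℝ}
    (hu : tupleForm u u = 0) : u = 0 := by
  rw [tupleForm_apply, Finset.sum_eq_zero_iff_of_nonneg fun j _ => fischer_self_nonneg _] at hu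
  exact funext fun j => eq_zero_of_fischer_self (hu j (Finset.mem_univ j))

theorem tupleForm_Lop (r s : Fin 4) (u v : Fin 4 → MvPolynomial (Fin 4) ℝ) :
    tupleForm (Lop r s u) v = -tupleForm u (Lop r s v) := by
  simp only [tupleForm_apply, Lop_eq, map_add, map_sub, LinearMap.add_apply, LinearMap.sub_apply,
    fischer_dd, Finset.sum_add_distrib, Finset.sum_sub_distrib, Finset.sum_neg_distrib]
  have h1 (a b : Fin 4) : ∑ j, fischer (if j = a then u b else 0) (v j) = fischer (u b) (v a) := by
    rw [Finset.sum_eq_single a (fun j _ hj => by simp [hj]) (by simp), if_pos rfl]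
  have h2 (a b : Fin 4) : ∑ j, fischer (u j) (if j = a then v b else 0) = fischer (u a) (v b) := by
    simp [apply_ite]
  rw [h1, h1, h2, h2]
  ring

instance eigenHk2_finiteDimensional (k : ℕ) (c : ℝ) : FiniteDimensional ℝ (eigenHk2 k c) := by
  have h : (Submodule.pi Set.univ fun _ : Fin 4 => homogeneousSubmodule (Fin 4) ℝ k).FG :=
    Submodule.fg_pi fun _ => homogeneousSubmodule_fg _ _ k
  have : FiniteDimensional ℝ (Submodule.pi Set.univ fun _ : Fin 4 =>
      homogeneousSubmodule (Fin 4) ℝ k) := Module.Finite.iff_fg.mpr h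
  exact Submodule.finiteDimensional_of_le (S₂ := Submodule.pi Set.univ fun _ : Fin 4 =>
    homogeneousSubmodule (Fin 4) ℝ k) fun u hu j _ => (hu.1.1 j).1

/-- Orthogonal decomposition of a finite-dimensional space of tuples along a subspace. -/
theorem exists_add_orthogonal {V W : Submodule ℝ (Fin 4 → MvPolynomial (Fin 4) ℝ)}
    [FiniteDimensional ℝ V] (hWV : W ≤ V) {u : Fin 4 → MvPolynomial (Fin 4) ℝ} (hu : u ∈ V) :
    ∃ w ∈ W, ∃ w' ∈ tupleForm.orthogonal W ⊓ V, w + w' = u := by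
  have hrefl : (tupleForm.restrict V).IsRefl := fun x y h => by
    simpa [tupleForm_comm] using h
  have hnd : ((tupleForm.restrict V).restrict (W.comap V.subtype)).Nondegenerate := by
    constructor
    · intro x hx
      exact Subtype.ext (Subtype.ext (eq_zero_of_tupleForm_self (hx x)))
    · intro x hx
      exact Subtype.ext (Subtype.ext (eq_zero_of_tupleForm_self (hx x)))
  have hc := LinearMap.BilinForm.isCompl_orthogonal_of_restrict_nondegenerate hrefl hnd
  have hmem : (⟨u, hu⟩ : V) ∈ W.comap V.subtype ⊔
      (tupleForm.restrict V).orthogonal (W.comap V.subtype) := hc.sup_eq_top ▸ Submodule.mem_top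
  obtain ⟨w, hw, w', hw', h⟩ := Submodule.mem_sup.mp hmem
  refine ⟨w, hw, w', ⟨fun x hx => ?_, w'.2⟩, congrArg Subtype.val h⟩
  exact hw' ⟨x, hWV hx⟩ hx

/-- The substitution `x₁ = z + z*`, `x₂ = -i(z - z*)`, `x₃ = w + w*`, `x₄ = -i(w - w*)`; the
variables of the target are `z, z*, w, w*`, in this order. -/
noncomputable def isotropic : MvPolynomial (Fin 4) ℝ →ₐ[ℝ] MvPolynomial (Fin 4) ℂ :=
  aeval ![X 0 + X 1, C (-Complex.I) * (X 0 - X 1), X 2 + X 3, C (-Complex.I) * (X 2 - X 3)]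

theorem C_I_mul_C_I :
    (C Complex.I * C Complex.I : MvPolynomial (Fin 4) ℂ) = -1 := by
  rw [← C_mul, Complex.I_mul_I, C_neg, C_1]

theorem isotropic_X : isotropic (X 0) = X 0 + X 1 ∧ isotropic (X 1) = -C Complex.I * (X 0 - X 1) ∧
    isotropic (X 2) = X 2 + X 3 ∧ isotropic (X 3) = -C Complex.I * (X 2 - X 3) := by
  simp [isotropic]

theorem pderiv_isotropic (i : Fin 4) (p : MvPolynomial (Fin 4) ℝ) :
    pderiv i (isotropic p) = ∑ j, pderiv i (isotropic (X j)) * isotropic (pderiv j p) := by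
  induction p using MvPolynomial.induction_on with
  | C a =>
    have h : isotropic (C a) = C (a : ℂ) := by
      rw [isotropic, aeval_C, IsScalarTower.algebraMap_apply ℝ ℂ]
      rfl
    simp [h]
  | add p q hp hq => simp [hp, hq, mul_add, Finset.sum_add_distrib]
  | mul_X p n hp =>
    simp only [map_mul, pderiv_mul, hp, map_add, mul_add, Finset.sum_add_distrib]
    congr 1
    · rw [Finset.sum_mul]
      exact Finset.sum_congr rfl fun j _ => by ring
    · rw [Finset.sum_eq_single n (fun j _ hj => by simp [pderiv_X_of_ne hj.symm]) (by simp)]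
      simp [mul_comm]

theorem pderiv_zero_isotropic (p : MvPolynomial (Fin 4) ℝ) :
    pderiv 0 (isotropic p) = isotropic (pderiv 0 p) - C Complex.I * isotropic (pderiv 1 p) := by
  rw [pderiv_isotropic]
  simp [Fin.sum_univ_four, isotropic_X]
  ring

theorem pderiv_one_isotropic (p : MvPolynomial (Fin 4) ℝ) :
    pderiv 1 (isotropic p) = isotropic (pderiv 0 p) + C Complex.I * isotropic (pderiv 1 p) := by
  rw [pderiv_isotropic]
  simp [Fin.sum_univ_four, isotropic_X]

theorem pderiv_two_isotropic (p : MvPolynomial (Fin 4) ℝ) :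
    pderiv 2 (isotropic p) = isotropic (pderiv 2 p) - C Complex.I * isotropic (pderiv 3 p) := by
  rw [pderiv_isotropic]
  simp [Fin.sum_univ_four, isotropic_X]
  ring

theorem pderiv_three_isotropic (p : MvPolynomial (Fin 4) ℝ) :
    pderiv 3 (isotropic p) = isotropic (pderiv 2 p) + C Complex.I * isotropic (pderiv 3 p) := by
  rw [pderiv_isotropic]
  simp [Fin.sum_univ_four, isotropic_X]

theorem isotropic_isHomogeneous {k : ℕ} {p : MvPolynomial (Fin 4) ℝ} (hp : p.IsHomogeneous k) :
    (isotropic p).IsHomogeneous k := by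
  rw [← one_mul k]
  refine hp.aeval _ fun i => ?_
  have hX (j : Fin 4) : (X j : MvPolynomial (Fin 4) ℂ).IsHomogeneous 1 := isHomogeneous_X _ j
  have hC {p : MvPolynomial (Fin 4) ℂ} (h : p.IsHomogeneous 1) :
      (C (-Complex.I) * p).IsHomogeneous 1 := h.C_mul _
  fin_cases i
  · exact (hX 0).add (hX 1)
  · exact hC ((hX 0).sub (hX 1))
  · exact (hX 2).add (hX 3)
  · exact hC ((hX 2).sub (hX 3))

/-- Only the zero pair is mapped to zero by `(p, q) ↦ p + i q`. -/
theorem eq_zero_of_isotropic_add {p q : MvPolynomial (Fin 4) ℝ}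
    (h : isotropic p + C Complex.I * isotropic q = 0) : p = 0 ∧ q = 0 := by
  let inv : MvPolynomial (Fin 4) ℂ →ₐ[ℂ] MvPolynomial (Fin 4) ℂ :=
    aeval ![C 2⁻¹ * (X 0 + C Complex.I * X 1), C 2⁻¹ * (X 0 - C Complex.I * X 1),
      C 2⁻¹ * (X 2 + C Complex.I * X 3), C 2⁻¹ * (X 2 - C Complex.I * X 3)]
  have hhalf : (C 2⁻¹ * 2 : MvPolynomial (Fin 4) ℂ) = 1 := by
    rw [show (2 : MvPolynomial (Fin 4) ℂ) = C 2 from rfl, ← C_mul]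
    norm_num
  have hinv : (inv.restrictScalars ℝ).comp isotropic = mapAlgHom (Complex.ofRealAm) := by
    refine algHom_ext fun j => ?_
    have hI := C_I_mul_C_I
    fin_cases j <;>
    · simp [isotropic_X, inv]
      grind
  have hr (r : MvPolynomial (Fin 4) ℝ) : inv (isotropic r) = map Complex.ofRealHom r :=
    DFunLike.congr_fun hinv r
  have h' := congrArg inv h
  rw [map_add, map_mul, hr, hr, map_zero] at h'
  have hc (m : Fin 4 →₀ ℕ) : coeff m p = 0 ∧ coeff m q = 0 := by
    have := congrArg (coeff m) h'
    simp [inv, coeff_C_mul, coeff_map, Complex.ext_iff] at this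
    exact this
  exact ⟨ext _ _ fun m => (hc m).1, ext _ _ fun m => (hc m).2⟩

/-- The components of a tuple in the isotropic frame. -/
noncomputable def isotropicTuple :
    (Fin 4 → MvPolynomial (Fin 4) ℝ) →ₗ[ℝ] (Fin 4 → MvPolynomial (Fin 4) ℂ) where
  toFun u := ![isotropic (u 0) + C Complex.I * isotropic (u 1),
    isotropic (u 0) - C Complex.I * isotropic (u 1),
    isotropic (u 2) + C Complex.I * isotropic (u 3),
    isotropic (u 2) - C Complex.I * isotropic (u 3)]
  map_add' u v := by
    funext j
    fin_cases j <;>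
    · simp
      ring
  map_smul' c u := by
    funext j
    fin_cases j <;> simp [smul_add, smul_sub]

theorem isotropicTuple_apply (u : Fin 4 → MvPolynomial (Fin 4) ℝ) : isotropicTuple u =
    ![isotropic (u 0) + C Complex.I * isotropic (u 1),
      isotropic (u 0) - C Complex.I * isotropic (u 1),
      isotropic (u 2) + C Complex.I * isotropic (u 3),
      isotropic (u 2) - C Complex.I * isotropic (u 3)] :=
  rfl

/-- The raising operator `X₀ ∂ₜ - Xₛ ∂₁` on scalars. -/
noncomputable def raise (s t : Fin 4) (p : MvPolynomial (Fin 4) ℂ) : MvPolynomial (Fin 4) ℂ :=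
  X 0 * pderiv t p - X s * pderiv 1 p

/-- The raising operators of `o(4,ℂ)` on tuples, for `(s, t) = (2, 3)` and `(s, t) = (3, 2)`. -/
noncomputable def raiseTuple (s t : Fin 4) :
    (Fin 4 → MvPolynomial (Fin 4) ℂ) →ₗ[ℂ] (Fin 4 → MvPolynomial (Fin 4) ℂ) where
  toFun U j := raise s t (U j) + ((if j = 1 then U s else 0) - (if j = t then U 0 else 0))
  map_add' U V := by
    funext j
    simp only [raise, Pi.add_apply, map_add]
    split_ifs <;> ring
  map_smul' c U := by
    funext j
    simp only [raise, Pi.smul_apply, smul_eq_C_mul, pderiv_C_mul, RingHom.id_apply]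
    split_ifs <;> ring

theorem raiseTuple_apply (s t : Fin 4) (U : Fin 4 → MvPolynomial (Fin 4) ℂ) (j : Fin 4) :
    raiseTuple s t U j =
      raise s t (U j) + ((if j = 1 then U s else 0) - (if j = t then U 0 else 0)) :=
  rfl

theorem raiseTuple_two_three_isotropicTuple (u : Fin 4 → MvPolynomial (Fin 4) ℝ) :
    (2 : ℂ) • raiseTuple 2 3 (isotropicTuple u)
      = isotropicTuple (Lop 0 2 u - Lop 1 3 u)
        + Complex.I • isotropicTuple (Lop 0 3 u + Lop 1 2 u) := by
  funext j
  have hI := C_I_mul_C_I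
  simp only [Pi.smul_apply, Pi.add_apply, smul_eq_C_mul, raiseTuple_apply, raise,
    isotropicTuple_apply, show C (2 : ℂ) = (2 : MvPolynomial (Fin 4) ℂ) from rfl]
  fin_cases j <;>
  · simp [Lop, isotropic_X, pderiv_one_isotropic, pderiv_three_isotropic]
    generalize C Complex.I = i at *
    grind

theorem raiseTuple_three_two_isotropicTuple (u : Fin 4 → MvPolynomial (Fin 4) ℝ) :
    (2 : ℂ) • raiseTuple 3 2 (isotropicTuple u)
      = isotropicTuple (Lop 0 2 u + Lop 1 3 u)
        + Complex.I • isotropicTuple (Lop 1 2 u - Lop 0 3 u) := by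
  funext j
  have hI := C_I_mul_C_I
  simp only [Pi.smul_apply, Pi.add_apply, smul_eq_C_mul, raiseTuple_apply, raise,
    isotropicTuple_apply, show C (2 : ℂ) = (2 : MvPolynomial (Fin 4) ℂ) from rfl]
  fin_cases j <;>
  · simp [Lop, isotropic_X, pderiv_one_isotropic, pderiv_two_isotropic]
    generalize C Complex.I = i at *
    grind

/-- The equations satisfied by the isotropic components of the elements of `eigenHk2 k c`. -/
def complexEigen (k : ℕ) (c : ℂ) : Submodule ℂ (Fin 4 → MvPolynomial (Fin 4) ℂ) where
  carrier := {U | (∀ i, (U i).IsHomogeneous k ∧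
      pderiv 0 (pderiv 1 (U i)) + pderiv 2 (pderiv 3 (U i)) = 0) ∧
    X 0 * U 1 + X 1 * U 0 + X 2 * U 3 + X 3 * U 2 = 0 ∧
    c • U 0 = -(X 2 * pderiv 2 (U 0) - X 3 * pderiv 3 (U 0)
      + (raise 2 3 (U 3) - raise 3 2 (U 2))) ∧
    c • U 2 = -(X 0 * pderiv 0 (U 2) - X 1 * pderiv 1 (U 2) - raise 2 3 (U 1)
      + (X 1 * pderiv 3 (U 0) - X 2 * pderiv 0 (U 0))) ∧
    c • U 3 = X 0 * pderiv 0 (U 3) - X 1 * pderiv 1 (U 3) - raise 3 2 (U 1)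
      + (X 1 * pderiv 2 (U 0) - X 3 * pderiv 0 (U 0))}
  zero_mem' := by simp [raise, isHomogeneous_zero]
  add_mem' := by
    rintro U V ⟨hU, hU₁, hU₂, hU₃, hU₄⟩ ⟨hV, hV₁, hV₂, hV₃, hV₄⟩
    refine ⟨fun i => ⟨(hU i).1.add (hV i).1, ?_⟩, ?_, ?_, ?_, ?_⟩
    · simp only [Pi.add_apply, map_add]
      linear_combination (hU i).2 + (hV i).2
    all_goals simp only [raise, Pi.add_apply, map_add, smul_add] at *
    · linear_combination hU₁ + hV₁
    · linear_combination hU₂ + hV₂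
    · linear_combination hU₃ + hV₃
    · linear_combination hU₄ + hV₄
  smul_mem' := by
    rintro a U ⟨hU, hU₁, hU₂, hU₃, hU₄⟩
    refine ⟨fun i => ⟨?_, ?_⟩, ?_, ?_, ?_, ?_⟩
    · simpa only [Pi.smul_apply, smul_eq_C_mul] using (hU i).1.C_mul a
    all_goals simp only [raise, Pi.smul_apply, smul_eq_C_mul, pderiv_C_mul] at *
    · linear_combination C a * (hU i).2
    · linear_combination C a * hU₁
    · linear_combination C a * hU₂
    · linear_combination C a * hU₃
    · linear_combination C a * hU₄

theorem isotropicTuple_mem_complexEigen {k : ℕ} {c : ℝ} {u : Fin 4 → MvPolynomial (Fin 4) ℝ}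
    (hu : u ∈ eigenHk2 k c) : isotropicTuple u ∈ complexEigen k c := by
  obtain ⟨⟨hu, hrad⟩, hD⟩ := mem_eigenHk2.1 hu
  have hI := C_I_mul_C_I
  have hlap (r : Fin 4) : pderiv 0 (pderiv 1 (isotropic (u r)))
      + pderiv 2 (pderiv 3 (isotropic (u r))) = 0 := by
    have h := congrArg isotropic (hu r).2
    simp only [lap, Fin.sum_univ_four, map_add, map_zero] at h
    simp only [pderiv_one_isotropic, pderiv_three_isotropic, map_add, pderiv_C_mul,
      pderiv_zero_isotropic, pderiv_two_isotropic]
    rw [pderiv_pderiv_comm 1 0, pderiv_pderiv_comm 3 2]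
    linear_combination h - (isotropic (pderiv 1 (pderiv 1 (u r)))
      + isotropic (pderiv 3 (pderiv 3 (u r)))) * hI
  have hhom (r : Fin 4) := isotropic_isHomogeneous (hu r).1
  have hsmul (r : Fin 4) : C (c : ℂ) * isotropic (u r) = isotropic (Dop u r) := by
    rw [hD, Pi.smul_apply, map_smul, ← smul_eq_C_mul, Complex.coe_smul]
  have h0 := hsmul 0
  have h1 := hsmul 1
  have h2 := hsmul 2
  have h3 := hsmul 3
  have hrad' := congrArg isotropic hrad
  simp only [Fin.sum_univ_four, map_add, map_mul, map_zero, isotropic_X] at hrad'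
  refine ⟨fun i => ?_, ?_, ?_, ?_, ?_⟩
  · have hadd (r s : Fin 4) : (isotropic (u r) + C Complex.I * isotropic (u s)).IsHomogeneous k :=
      (hhom r).add ((hhom s).C_mul _)
    have hsub (r s : Fin 4) : (isotropic (u r) - C Complex.I * isotropic (u s)).IsHomogeneous k :=
      (hhom r).sub ((hhom s).C_mul _)
    fin_cases i
    · refine ⟨hadd 0 1, ?_⟩
      simp [isotropicTuple_apply]
      linear_combination hlap 0 + C Complex.I * hlap 1
    · refine ⟨hsub 0 1, ?_⟩
      simp [isotropicTuple_apply]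
      linear_combination hlap 0 - C Complex.I * hlap 1
    · refine ⟨hadd 2 3, ?_⟩
      simp [isotropicTuple_apply]
      linear_combination hlap 2 + C Complex.I * hlap 3
    · refine ⟨hsub 2 3, ?_⟩
      simp [isotropicTuple_apply]
      linear_combination hlap 2 - C Complex.I * hlap 3
  · simp [isotropicTuple_apply]
    generalize C Complex.I = i at *
    grind
  all_goals
    rw [smul_eq_C_mul]
    simp [isotropicTuple_apply, raise, Dop, dd, isotropic_X, pderiv_zero_isotropic,
      pderiv_one_isotropic, pderiv_two_isotropic, pderiv_three_isotropic] at h0 h1 h2 h3 ⊢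
    clear hsmul hrad' hhom hlap hD hu hrad
    generalize C Complex.I = i at *
    generalize C (c : ℂ) = a at *
  · linear_combination h0 + i * h1 + ((X 2 - X 3) * (isotropic (pderiv 2 (u 0))
      - isotropic (pderiv 0 (u 2))) - (X 2 + X 3) * (isotropic (pderiv 3 (u 1))
      - isotropic (pderiv 1 (u 3)))) * hI
  · linear_combination h2 + i * h3 + ((X 0 + X 1) * (isotropic (pderiv 3 (u 1))
      - isotropic (pderiv 1 (u 3))) - (X 0 - X 1) * (isotropic (pderiv 2 (u 0))
      - isotropic (pderiv 0 (u 2)))) * hI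
  · linear_combination h2 - i * h3 + ((X 0 + X 1) * (isotropic (pderiv 3 (u 1))
      - isotropic (pderiv 1 (u 3))) + (X 0 - X 1) * (isotropic (pderiv 2 (u 0))
      - isotropic (pderiv 0 (u 2)))) * hI

theorem exists_coeff_ne_zero_of_coeff_X_mul_pderiv {s t : Fin 4} {p : MvPolynomial (Fin 4) ℂ}
    {m : Fin 4 →₀ ℕ} (h : coeff m (X s * pderiv t p) ≠ 0) :
    ∃ m', coeff m' p ≠ 0 ∧ m + Finsupp.single t 1 = m' + Finsupp.single s 1 := by
  rw [coeff_X_mul'] at h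
  split_ifs at h with hs
  · rw [coeff_pderiv] at h
    refine ⟨_, left_ne_zero_of_mul h, ?_⟩
    rw [add_right_comm, tsub_add_cancel_of_le]
    rw [Finsupp.single_le_iff]
    exact Nat.one_le_iff_ne_zero.2 (Finsupp.mem_support_iff.1 hs)
  · exact absurd rfl h

theorem coeff_X_mul_pderiv_self (s : Fin 4) (p : MvPolynomial (Fin 4) ℂ) (m : Fin 4 →₀ ℕ) :
    coeff m (X s * pderiv s p) = m s * coeff m p := by
  rw [coeff_X_mul']
  split_ifs with hs
  · have h1 : 1 ≤ m s := Nat.one_le_iff_ne_zero.2 (Finsupp.mem_support_iff.1 hs)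
    rw [coeff_pderiv, tsub_add_cancel_of_le (by rwa [Finsupp.single_le_iff]), mul_comm]
    congr 1
    simp [Nat.cast_sub h1]
  · simp [Finsupp.notMem_support_iff.1 hs]

/-- All exponents `m` of `U i` have weight `2m₁ + m₂ + m₃`, shifted by `2, 0, 1, 1`, below `n`. -/
def WeightBelow (n : ℕ) (U : Fin 4 → MvPolynomial (Fin 4) ℂ) : Prop :=
  ∀ i m, coeff m (U i) ≠ 0 → 2 * m 1 + m 2 + m 3 + ![2, 0, 1, 1] i < n

theorem exists_coeff_ne_zero_of_coeff_raise {s t : Fin 4}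
    (hst : s = 2 ∧ t = 3 ∨ s = 3 ∧ t = 2) {p : MvPolynomial (Fin 4) ℂ} {m : Fin 4 →₀ ℕ}
    (h : coeff m (raise s t p) ≠ 0) :
    ∃ m', coeff m' p ≠ 0 ∧ 2 * m 1 + m 2 + m 3 + 1 = 2 * m' 1 + m' 2 + m' 3 := by
  have h' : coeff m (X 0 * pderiv t p) ≠ 0 ∨ coeff m (X s * pderiv 1 p) ≠ 0 := by
    by_contra! hn
    exact h (by rw [raise, coeff_sub, hn.1, hn.2, sub_zero])
  rcases h' with h' | h' <;>
  · obtain ⟨m', hm', he⟩ := exists_coeff_ne_zero_of_coeff_X_mul_pderiv h'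
    refine ⟨m', hm', ?_⟩
    have e1 := DFunLike.congr_fun he 1
    have e2 := DFunLike.congr_fun he 2
    have e3 := DFunLike.congr_fun he 3
    rcases hst with ⟨rfl, rfl⟩ | ⟨rfl, rfl⟩ <;>
    · simp at e1 e2 e3
      omega

theorem WeightBelow.raiseTuple {s t : Fin 4} (hst : s = 2 ∧ t = 3 ∨ s = 3 ∧ t = 2) {n : ℕ}
    {U : Fin 4 → MvPolynomial (Fin 4) ℂ} (hU : WeightBelow (n + 1) U) :
    WeightBelow n (raiseTuple s t U) := by
  intro i m h
  by_cases hr : coeff m (raise s t (U i)) = 0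
  · rw [raiseTuple_apply, coeff_add, hr, zero_add, coeff_sub] at h
    rcases hst with ⟨rfl, rfl⟩ | ⟨rfl, rfl⟩ <;> fin_cases i <;> simp at h
    · have := hU 2 m h
      simp at this ⊢
      omega
    · have := hU 0 m h
      simp at this ⊢
      omega
    · have := hU 3 m h
      simp at this ⊢
      omega
    · have := hU 0 m h
      simp at this ⊢
      omega
  · obtain ⟨m', hm', he⟩ := exists_coeff_ne_zero_of_coeff_raise hst hr
    have := hU i m' hm'
    omega

/-- A nonzero subspace stable under the raising operators contains a highest weight vector. -/
theorem exists_highestWeight {V : Submodule ℂ (Fin 4 → MvPolynomial (Fin 4) ℂ)}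
    (h₂₃ : ∀ U ∈ V, raiseTuple 2 3 U ∈ V) (h₃₂ : ∀ U ∈ V, raiseTuple 3 2 U ∈ V) (n : ℕ)
    {U : Fin 4 → MvPolynomial (Fin 4) ℂ} (hU : U ∈ V) (hn : WeightBelow n U) (h0 : U ≠ 0) :
    ∃ U' ∈ V, U' ≠ 0 ∧ raiseTuple 2 3 U' = 0 ∧ raiseTuple 3 2 U' = 0 := by
  induction n generalizing U with
  | zero =>
    refine absurd (_root_.funext fun i => ext _ _ fun m => ?_) h0
    by_contra h
    exact absurd (hn i m h) (Nat.not_lt_zero _)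
  | succ n ih =>
    by_cases h : raiseTuple 2 3 U = 0
    · by_cases h' : raiseTuple 3 2 U = 0
      · exact ⟨U, hU, h0, h, h'⟩
      · exact ih (h₃₂ U hU) (hn.raiseTuple (Or.inr ⟨rfl, rfl⟩)) h'
    · exact ih (h₂₃ U hU) (hn.raiseTuple (Or.inl ⟨rfl, rfl⟩)) h

theorem weightBelow_of_mem_complexEigen {k : ℕ} {c : ℂ} {U : Fin 4 → MvPolynomial (Fin 4) ℂ}
    (hU : U ∈ complexEigen k c) : WeightBelow (2 * k + 3) U := by
  intro i m h
  have hd : m.degree = k := by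
    rw [Finsupp.degree_eq_weight_one]
    exact (hU.1 i).1 h
  rw [Finsupp.degree_eq_sum, Fin.sum_univ_four] at hd
  fin_cases i <;> simp <;> omega

/-- A harmonic polynomial annihilated by both raising operators depends on `X 0` only. -/
theorem pderiv_eq_zero_of_raise_eq_zero {p : MvPolynomial (Fin 4) ℂ}
    (hlap : pderiv 0 (pderiv 1 p) + pderiv 2 (pderiv 3 p) = 0)
    (h₂₃ : raise 2 3 p = 0) (h₃₂ : raise 3 2 p = 0) :
    pderiv 1 p = 0 ∧ pderiv 2 p = 0 ∧ pderiv 3 p = 0 := by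
  rw [raise] at h₂₃ h₃₂
  have h1 : pderiv 1 p = 0 := by
    have h := congrArg (pderiv 2) h₂₃
    simp at h
    have hq : X 0 * pderiv 0 (pderiv 1 p) + X 2 * pderiv 2 (pderiv 1 p) + pderiv 1 p = 0 := by
      linear_combination X 0 * hlap - h
    ext m
    have hm := congrArg (coeff m) hq
    rw [coeff_add, coeff_add, coeff_X_mul_pderiv_self, coeff_X_mul_pderiv_self, coeff_zero] at hm
    have hm' : ((m 0 + m 2 + 1 : ℕ) : ℂ) * coeff m (pderiv 1 p) = 0 := by
      push_cast
      linear_combination hm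
    exact (mul_eq_zero.1 hm').resolve_left (Nat.cast_ne_zero.2 (Nat.succ_ne_zero _))
  simp only [h1, mul_zero, sub_zero, mul_eq_zero, X_ne_zero, false_or] at h₂₃ h₃₂
  exact ⟨h1, h₃₂, h₂₃⟩

theorem eq_zero_of_coeff_single_zero {k : ℕ} {p : MvPolynomial (Fin 4) ℂ} (hp : p.IsHomogeneous k)
    (hd : pderiv 1 p = 0 ∧ pderiv 2 p = 0 ∧ pderiv 3 p = 0)
    (h : coeff (Finsupp.single 0 k) p = 0) : p = 0 := by
  ext m
  by_contra hm
  rw [coeff_zero] at hm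
  have hz {i : Fin 4} (hi : pderiv i p = 0) : m i = 0 := by
    have := coeff_X_mul_pderiv_self i p m
    rw [hi, mul_zero, coeff_zero] at this
    exact_mod_cast (mul_eq_zero.1 this.symm).resolve_right hm
  have hdeg : m.degree = k := by
    rw [Finsupp.degree_eq_weight_one]
    exact hp hm
  rw [Finsupp.degree_eq_sum, Fin.sum_univ_four, hz hd.1, hz hd.2.1, hz hd.2.2] at hdeg
  refine hm ?_
  convert h
  ext i
  fin_cases i
  · simpa using hdeg
  · simpa using hz hd.1
  · simpa using hz hd.2.1
  · simpa using hz hd.2.2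

/-- The leading coefficient of a highest weight vector. -/
noncomputable def leadingCoeff (k : ℕ) : (Fin 4 → MvPolynomial (Fin 4) ℂ) →ₗ[ℂ] ℂ where
  toFun U := coeff (Finsupp.single 0 k) (U 2) + coeff (Finsupp.single 0 k) (U 3)
  map_add' U V := by
    simp only [Pi.add_apply, coeff_add]
    ring
  map_smul' c U := by simp [mul_add]

theorem leadingCoeff_apply (k : ℕ) (U : Fin 4 → MvPolynomial (Fin 4) ℂ) :
    leadingCoeff k U = coeff (Finsupp.single 0 k) (U 2) + coeff (Finsupp.single 0 k) (U 3) :=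
  rfl

theorem eq_zero_of_leadingCoeff_eq_zero {k : ℕ} {c : ℂ} (hc : c = k + 1 ∨ c = -(k + 1))
    {U : Fin 4 → MvPolynomial (Fin 4) ℂ} (hU : U ∈ complexEigen k c)
    (h₂₃ : raiseTuple 2 3 U = 0) (h₃₂ : raiseTuple 3 2 U = 0) (hl : leadingCoeff k U = 0) :
    U = 0 := by
  obtain ⟨hU, hrad, hD0, hD2, hD3⟩ := hU
  have hk : (k : ℂ) + 1 ≠ 0 := Nat.cast_add_one_ne_zero k
  have hc0 : c ≠ 0 := by
    rcases hc with rfl | rfl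
    · exact hk
    · exact neg_ne_zero.2 hk
  have a0 := congrFun h₂₃ 0
  have a1 := congrFun h₂₃ 1
  have a2 := congrFun h₂₃ 2
  have a3 := congrFun h₂₃ 3
  have b0 := congrFun h₃₂ 0
  have b1 := congrFun h₃₂ 1
  have b2 := congrFun h₃₂ 2
  have b3 := congrFun h₃₂ 3
  simp [raiseTuple_apply] at a0 a1 a2 a3 b0 b1 b2 b3
  have d0 := pderiv_eq_zero_of_raise_eq_zero (hU 0).2 a0 b0
  have hU0 : U 0 = 0 := by
    have : c • U 0 = 0 := by
      rw [hD0, d0.2.1, d0.2.2]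
      linear_combination b2 - a3
    exact (smul_eq_zero.1 this).resolve_left hc0
  rw [hU0, neg_zero, add_zero] at a3 b2
  have d2 := pderiv_eq_zero_of_raise_eq_zero (hU 2).2 a2 b2
  have d3 := pderiv_eq_zero_of_raise_eq_zero (hU 3).2 a3 b3
  have e2 := (hU 2).1.sum_X_mul_pderiv
  have e3 := (hU 3).1.sum_X_mul_pderiv
  simp only [Fin.sum_univ_four, d2, d3, mul_zero, add_zero] at e2 e3
  have c2 : (c + (k + 1)) • U 2 = 0 := by
    rw [add_smul, hD2, e2, d2.1, hU0, smul_eq_C_mul]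
    simp
    linear_combination a1
  have c3 : (c - (k + 1)) • U 3 = 0 := by
    rw [sub_smul, hD3, e3, d3.1, hU0, smul_eq_C_mul]
    simp
    linear_combination -b1
  rw [leadingCoeff_apply] at hl
  have hU23 : U 2 = 0 ∧ U 3 = 0 := by
    rcases hc with rfl | rfl
    · have h2 : U 2 = 0 := by
        refine (smul_eq_zero.1 c2).resolve_left ?_
        rw [← two_mul]
        exact mul_ne_zero two_ne_zero hk
      rw [h2, coeff_zero, zero_add] at hl
      exact ⟨h2, eq_zero_of_coeff_single_zero (hU 3).1 d3 hl⟩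
    · have h3 : U 3 = 0 := by
        refine (smul_eq_zero.1 c3).resolve_left ?_
        rw [← neg_add', ← two_mul]
        exact neg_ne_zero.2 (mul_ne_zero two_ne_zero hk)
      rw [h3, coeff_zero, add_zero] at hl
      exact ⟨eq_zero_of_coeff_single_zero (hU 2).1 d2 hl, h3⟩
  rw [hU0, hU23.1, hU23.2] at hrad
  simp at hrad
  funext i
  fin_cases i
  · exact hU0
  · exact hrad
  · exact hU23.1
  · exact hU23.2

/-- The complex span, in isotropic coordinates, of a real space of tuples. -/
noncomputable def complexify (W : Submodule ℝ (Fin 4 → MvPolynomial (Fin 4) ℝ)) :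
    Submodule ℂ (Fin 4 → MvPolynomial (Fin 4) ℂ) where
  carrier := {U | ∃ a ∈ W, ∃ b ∈ W, U = isotropicTuple a + Complex.I • isotropicTuple b}
  zero_mem' := ⟨0, W.zero_mem, 0, W.zero_mem, by simp⟩
  add_mem' := by
    rintro _ _ ⟨a, ha, b, hb, rfl⟩ ⟨a', ha', b', hb', rfl⟩
    refine ⟨a + a', W.add_mem ha ha', b + b', W.add_mem hb hb', ?_⟩
    rw [map_add, map_add, smul_add]
    abel
  smul_mem' := by
    rintro z _ ⟨a, ha, b, hb, rfl⟩
    refine ⟨z.re • a - z.im • b, W.sub_mem (W.smul_mem _ ha) (W.smul_mem _ hb),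
      z.re • b + z.im • a, W.add_mem (W.smul_mem _ hb) (W.smul_mem _ ha), ?_⟩
    have hz := Complex.re_add_im z
    simp only [map_sub, map_add, map_smul, ← Complex.coe_smul]
    match_scalars
    · linear_combination -hz
    · linear_combination -Complex.I * hz + z.im * Complex.I_mul_I

theorem isotropicTuple_mem_complexify {W : Submodule ℝ (Fin 4 → MvPolynomial (Fin 4) ℝ)}
    {u : Fin 4 → MvPolynomial (Fin 4) ℝ} (hu : u ∈ W) : isotropicTuple u ∈ complexify W :=
  ⟨u, hu, 0, W.zero_mem, by simp⟩

theorem eq_zero_of_isotropicTuple_add {a b : Fin 4 → MvPolynomial (Fin 4) ℝ}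
    (h : isotropicTuple a + Complex.I • isotropicTuple b = 0) : a = 0 ∧ b = 0 := by
  have hI := C_I_mul_C_I
  have h0 := congrFun h 0
  have h1 := congrFun h 1
  have h2 := congrFun h 2
  have h3 := congrFun h 3
  simp [isotropicTuple_apply, smul_eq_C_mul] at h0 h1 h2 h3
  have k (r : Fin 4) : isotropic (a r) + C Complex.I * isotropic (b r) = 0 := by
    fin_cases r <;> simp <;> grind
  exact ⟨_root_.funext fun r => (eq_zero_of_isotropic_add (k r)).1,
    _root_.funext fun r => (eq_zero_of_isotropic_add (k r)).2⟩

theorem disjoint_complexify {W W' : Submodule ℝ (Fin 4 → MvPolynomial (Fin 4) ℝ)}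
    (h : Disjoint W W') : Disjoint (complexify W) (complexify W') := by
  rw [Submodule.disjoint_def] at h ⊢
  rintro _ ⟨a, ha, b, hb, rfl⟩ ⟨a', ha', b', hb', he⟩
  have h0 : isotropicTuple (a - a') + Complex.I • isotropicTuple (b - b') = 0 := by
    rw [map_sub, map_sub, smul_sub]
    rw [← sub_eq_zero] at he
    rw [← he]
    abel
  obtain ⟨hab, hab'⟩ := eq_zero_of_isotropicTuple_add h0
  rw [sub_eq_zero] at hab hab'
  rw [h a ha (hab ▸ ha'), h b hb (hab' ▸ hb')]
  simp

theorem raiseTuple_mem_complexify {W : Submodule ℝ (Fin 4 → MvPolynomial (Fin 4) ℝ)}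
    (hW : ∀ r s : Fin 4, r < s → ∀ u ∈ W, Lop r s u ∈ W) {U : Fin 4 → MvPolynomial (Fin 4) ℂ}
    (hU : U ∈ complexify W) :
    raiseTuple 2 3 U ∈ complexify W ∧ raiseTuple 3 2 U ∈ complexify W := by
  obtain ⟨a, ha, b, hb, rfl⟩ := hU
  have hL {u : Fin 4 → MvPolynomial (Fin 4) ℝ} (hu : u ∈ W) :
      raiseTuple 2 3 (isotropicTuple u) ∈ complexify W ∧
      raiseTuple 3 2 (isotropicTuple u) ∈ complexify W := by
    have h02 := hW 0 2 (by decide) u hu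
    have h03 := hW 0 3 (by decide) u hu
    have h12 := hW 1 2 (by decide) u hu
    have h13 := hW 1 3 (by decide) u hu
    constructor
    · rw [← (complexify W).smul_mem_iff (two_ne_zero (α := ℂ)), raiseTuple_two_three_isotropicTuple]
      exact ⟨_, W.sub_mem h02 h13, _, W.add_mem h03 h12, rfl⟩
    · rw [← (complexify W).smul_mem_iff (two_ne_zero (α := ℂ)), raiseTuple_three_two_isotropicTuple]
      exact ⟨_, W.add_mem h02 h13, _, W.sub_mem h12 h03, rfl⟩
  simp only [map_add, map_smul]
  exact ⟨add_mem (hL ha).1 (Submodule.smul_mem _ _ (hL hb).1),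
    add_mem (hL ha).2 (Submodule.smul_mem _ _ (hL hb).2)⟩

theorem complexify_le_complexEigen {k : ℕ} {c : ℝ}
    {W : Submodule ℝ (Fin 4 → MvPolynomial (Fin 4) ℝ)} (hW : W ≤ eigenHk2 k c) :
    complexify W ≤ complexEigen k c := by
  rintro _ ⟨a, ha, b, hb, rfl⟩
  exact add_mem (isotropicTuple_mem_complexEigen (hW ha))
    (Submodule.smul_mem _ _ (isotropicTuple_mem_complexEigen (hW hb)))

theorem exists_highestWeight_complexify {k : ℕ} {c : ℝ}
    {W : Submodule ℝ (Fin 4 → MvPolynomial (Fin 4) ℝ)} (hWE : W ≤ eigenHk2 k c)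
    (hW : ∀ r s : Fin 4, r < s → ∀ u ∈ W, Lop r s u ∈ W) (hne : W ≠ ⊥) :
    ∃ U ∈ complexify W, U ≠ 0 ∧ raiseTuple 2 3 U = 0 ∧ raiseTuple 3 2 U = 0 := by
  obtain ⟨u, hu, hu0⟩ := W.ne_bot_iff.1 hne
  refine exists_highestWeight (fun U hU => (raiseTuple_mem_complexify hW hU).1)
    (fun U hU => (raiseTuple_mem_complexify hW hU).2) _ (isotropicTuple_mem_complexify hu)
    (weightBelow_of_mem_complexEigen (isotropicTuple_mem_complexEigen (hWE hu))) fun h => hu0 ?_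
  exact (eq_zero_of_isotropicTuple_add (a := u) (b := 0) (by simp [h])).1

/-- Two nonzero invariant subspaces of `eigenHk2 k (±(k + 1))` share a highest weight vector. -/
theorem eq_bot_or_eq_bot_of_disjoint {k : ℕ} {c : ℝ} (hc : c = k + 1 ∨ c = -(k + 1))
    {W W' : Submodule ℝ (Fin 4 → MvPolynomial (Fin 4) ℝ)}
    (hWE : W ≤ eigenHk2 k c) (hW : ∀ r s : Fin 4, r < s → ∀ u ∈ W, Lop r s u ∈ W)
    (hWE' : W' ≤ eigenHk2 k c) (hW' : ∀ r s : Fin 4, r < s → ∀ u ∈ W', Lop r s u ∈ W')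
    (hd : Disjoint W W') : W = ⊥ ∨ W' = ⊥ := by
  have hc' : (c : ℂ) = k + 1 ∨ (c : ℂ) = -(k + 1) := by exact_mod_cast hc
  by_contra! hne
  obtain ⟨U, hU, hU0, hU₂₃, hU₃₂⟩ := exists_highestWeight_complexify hWE hW hne.1
  obtain ⟨V, hV, hV0, hV₂₃, hV₃₂⟩ := exists_highestWeight_complexify hWE' hW' hne.2
  have hUE := complexify_le_complexEigen hWE hU
  have hVE := complexify_le_complexEigen hWE' hV
  have hprop : leadingCoeff k V • U - leadingCoeff k U • V = 0 := by
    refine eq_zero_of_leadingCoeff_eq_zero hc'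
      (sub_mem (Submodule.smul_mem _ _ hUE) (Submodule.smul_mem _ _ hVE)) ?_ ?_ ?_
    · simp [hU₂₃, hV₂₃]
    · simp [hU₃₂, hV₃₂]
    · simp [mul_comm]
  have hlV : leadingCoeff k V ≠ 0 := fun h =>
    hV0 (eq_zero_of_leadingCoeff_eq_zero hc' hVE hV₂₃ hV₃₂ h)
  refine hU0 (Submodule.disjoint_def.1 (disjoint_complexify hd) U hU ?_)
  rw [← (complexify W').smul_mem_iff hlV, sub_eq_zero.1 hprop]
  exact Submodule.smul_mem _ _ hV

theorem eq_bot_or_eq_eigenHk2 {k : ℕ} {c : ℝ} (hc : c = k + 1 ∨ c = -(k + 1))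
    {W : Submodule ℝ (Fin 4 → MvPolynomial (Fin 4) ℝ)} (hWE : W ≤ eigenHk2 k c)
    (hW : ∀ r s : Fin 4, r < s → ∀ u ∈ W, Lop r s u ∈ W) : W = ⊥ ∨ W = eigenHk2 k c := by
  have hd : Disjoint W (tupleForm.orthogonal W ⊓ eigenHk2 k c) := by
    rw [Submodule.disjoint_def]
    exact fun u hu hu' => eq_zero_of_tupleForm_self (hu'.1 u hu)
  have hW' : ∀ r s : Fin 4, r < s → ∀ u ∈ tupleForm.orthogonal W ⊓ eigenHk2 k c,
      Lop r s u ∈ tupleForm.orthogonal W ⊓ eigenHk2 k c := by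
    refine fun r s hrs u hu => ⟨fun w hw => ?_, Lop_mem_eigenHk2 hu.2 r s⟩
    have h := tupleForm_Lop r s w u
    rw [hu.1 _ (hW r s hrs w hw)] at h
    exact neg_eq_zero.1 h.symm
  refine (eq_bot_or_eq_bot_of_disjoint hc hWE hW inf_le_right hW' hd).imp_right fun h => ?_
  refine le_antisymm hWE fun u hu => ?_
  obtain ⟨w, hw, w', hw', rfl⟩ := exists_add_orthogonal hWE hu
  rw [h, Submodule.mem_bot] at hw'
  rwa [hw', add_zero]

/-- for `n = 4` and `k ≥ 1`, `Ĥ_{k,2} = Ĥ_{k,2+} ⊕ Ĥ_{k,2−}` (unique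
decomposition), and each of `Ĥ_{k,2+}`, `Ĥ_{k,2−}` is `L_{r,s}`-invariant with no
`L_{r,s}`-invariant ℝ-subspaces other than `{0}` and itself. -/
theorem Hk2_splits_irreducible (k : ℕ) (hk : 1 ≤ k) :
    (∀ u ∈ Hk2Set k,
      ∃! p : (Fin 4 → MvPolynomial (Fin 4) ℝ) × (Fin 4 → MvPolynomial (Fin 4) ℝ),
        p.1 ∈ Hk2Plus k ∧ p.2 ∈ Hk2Minus k ∧ u = p.1 + p.2) ∧
    (∀ r s : Fin 4, r < s → ∀ u ∈ Hk2Plus k, Lop r s u ∈ Hk2Plus k) ∧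
    (∀ r s : Fin 4, r < s → ∀ u ∈ Hk2Minus k, Lop r s u ∈ Hk2Minus k) ∧
    (∀ W : Submodule ℝ (Fin 4 → MvPolynomial (Fin 4) ℝ),
      (W : Set (Fin 4 → MvPolynomial (Fin 4) ℝ)) ⊆ Hk2Plus k →
      (∀ r s : Fin 4, r < s → ∀ u ∈ W, Lop r s u ∈ W) →
      (W : Set (Fin 4 → MvPolynomial (Fin 4) ℝ)) = {0} ∨
        (W : Set (Fin 4 → MvPolynomial (Fin 4) ℝ)) = Hk2Plus k) ∧
    (∀ W : Submodule ℝ (Fin 4 → MvPolynomial (Fin 4) ℝ),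
      (W : Set (Fin 4 → MvPolynomial (Fin 4) ℝ)) ⊆ Hk2Minus k →
      (∀ r s : Fin 4, r < s → ∀ u ∈ W, Lop r s u ∈ W) →
      (W : Set (Fin 4 → MvPolynomial (Fin 4) ℝ)) = {0} ∨
        (W : Set (Fin 4 → MvPolynomial (Fin 4) ℝ)) = Hk2Minus k) := by
  refine ⟨fun u hu => Hk2_splits hu, fun r s _ u hu => Lop_mem_eigenHk2 hu r s,
    fun r s _ u hu => Lop_mem_eigenHk2 hu r s, fun W hWE hW => ?_, fun W hWE hW => ?_⟩
  · exact (eq_bot_or_eq_eigenHk2 (Or.inl rfl) hWE hW).imp (fun h => by simp [h])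
      (fun h => by rw [h]; rfl)
  · exact (eq_bot_or_eq_eigenHk2 (Or.inr rfl) hWE hW).imp (fun h => by simp [h])
      (fun h => by rw [h]; rfl)
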